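/- arXiv:2101.12289 — 2 statements merged into one kernel-verified Lean document; each statement's English description precedes it below -/
import Mathlib

section
/- Let (α, 𝔄) be a standard Borel space. Then the set of all duplicate-free finite multisets over α (that is, finite multisets in which every element has multiplicity 1, corresponding to set instances) belongs to the counting σ-algebra 𝔠 on finite multisets over α. -/
open MeasureTheory

/- `bagCount F D` is `|D|_F`: the number of elements of the finite bag (multiset) `D`
that lie in the set `F`, counted with multiplicity. -/
open Classical in
noncomputable def bagCount {α : Type*} (F : Set α) (D : Multiset α) : ℕ :=
  Multiset.countP (fun a => a ∈ F) D

/-- The counting event `#(F, n)`: all finite bags `D` with `|D|_F = n`. -/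
def countingEvent {α : Type*} (F : Set α) (n : ℕ) : Set (Multiset α) :=
  {D : Multiset α | bagCount F D = n}

/-- The counting σ-algebra `𝔠` on finite bags (multisets) over a measurable space `α`:
the σ-algebra generated by the counting events `#(F, n)` for measurable `F ⊆ α` and `n ∈ ℕ`. -/
def countingSigmaAlgebra (α : Type*) [MeasurableSpace α] : MeasurableSpace (Multiset α) :=
  MeasurableSpace.generateFrom
    {A : Set (Multiset α) | ∃ (F : Set α) (n : ℕ), MeasurableSet F ∧ A = countingEvent F n}

/-!
Fix a sequence of measurable sets separating the points of `α`. Membership in the first `n` of them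
cuts `α` into finitely many measurable cells. A bag with a duplicate has two elements in a common
cell at every stage `n`, whereas the finitely many elements of a duplicate-free bag lie in distinct
cells once `n` is large. So `D` is duplicate-free if and only if, for some `n`, it has at most one
element in each cell of stage `n`, which is a countable union of finite intersections of events
`|D|_F ≤ 1`.
-/

section Separation

variable {α : Type*} {t : ℕ → Set α}

lemma mem_iff_mem_of_mem_memPartition {n i : ℕ} (hi : i < n) {F : Set α}
    (hF : F ∈ memPartition t n) {a b : α} (ha : a ∈ F) (hb : b ∈ F) : a ∈ t i ↔ b ∈ t i := by
  induction n generalizing F with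
  | zero => exact absurd hi i.not_lt_zero
  | succ n ih =>
    obtain ⟨G, hG, rfl | rfl⟩ := hF <;> rcases Nat.lt_succ_iff_lt_or_eq.mp hi with hlt | rfl
    · exact ih hlt hG ha.1 hb.1
    · exact iff_of_true ha.2 hb.2
    · exact ih hlt hG ha.1 hb.1
    · exact iff_of_false ha.2 hb.2

lemma exists_forall_memPartition_subsingleton_inter
    (ht : ∀ a b, (∀ i, a ∈ t i ↔ b ∈ t i) → a = b) {s : Set α} (hs : s.Finite) :
    ∃ n, ∀ F ∈ memPartition t n, (s ∩ F).Subsingleton := by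
  have separates_eventually : ∀ p : α × α, ∀ᶠ n in Filter.atTop,
      ∀ F ∈ memPartition t n, p.1 ∈ F → p.2 ∈ F → p.1 = p.2 := by
    rintro ⟨a, b⟩
    by_cases hab : a = b
    · exact .of_forall fun _ _ _ _ _ ↦ hab
    · obtain ⟨i, hi⟩ := not_forall.mp (mt (ht a b) hab)
      filter_upwards [Filter.eventually_gt_atTop i] with n hn F hF ha hb
      exact absurd (mem_iff_mem_of_mem_memPartition hn hF ha hb) hi
  obtain ⟨n, hn⟩ :=
    ((hs.prod hs).eventually_all.mpr fun p _ ↦ separates_eventually p).exists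
  exact ⟨n, fun F hF a ha b hb ↦ hn (a, b) ⟨ha.1, hb.1⟩ F hF ha.2 hb.2⟩

end Separation

section BagCount

variable {α : Type*} {D : Multiset α}

lemma bagCount_le_one_iff_of_nodup (hD : D.Nodup) {F : Set α} :
    bagCount F D ≤ 1 ↔ ({a | a ∈ D} ∩ F).Subsingleton := by
  classical
  have card_eq : bagCount F D = (⟨D.filter (· ∈ F), hD.filter _⟩ : Finset α).card := by
    rw [Finset.card_mk, ← Multiset.countP_eq_card_filter]
    unfold bagCount
    congr!
  rw [card_eq, Finset.card_le_one]
  simp [Set.Subsingleton]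

lemma nodup_of_forall_bagCount_le_one {P : Set (Set α)} (hP : ⋃₀ P = Set.univ)
    (hD : ∀ F ∈ P, bagCount F D ≤ 1) : D.Nodup := by
  rw [Multiset.nodup_iff_ne_cons_cons]
  rintro a E rfl
  obtain ⟨F, hF, haF⟩ := Set.sUnion_eq_univ_iff.mp hP a
  have two_le : 2 ≤ bagCount F (a ::ₘ a ::ₘ E) := by simp [bagCount, haF]
  exact absurd (hD F hF) (by lia)

lemma nodup_iff_exists_forall_memPartition_bagCount_le_one {t : ℕ → Set α}
    (ht : ∀ a b, (∀ i, a ∈ t i ↔ b ∈ t i) → a = b) :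
    D.Nodup ↔ ∃ n, ∀ F ∈ memPartition t n, bagCount F D ≤ 1 := by
  constructor
  · intro hD
    obtain ⟨n, hn⟩ := exists_forall_memPartition_subsingleton_inter ht D.finite_toSet
    exact ⟨n, fun F hF ↦ (bagCount_le_one_iff_of_nodup hD).mpr (hn F hF)⟩
  · rintro ⟨n, hn⟩
    exact nodup_of_forall_bagCount_le_one (sUnion_memPartition t n) hn

end BagCount

lemma measurable_bagCount {α : Type*} [MeasurableSpace α] {F : Set α} (hF : MeasurableSet F) :
    Measurable[countingSigmaAlgebra α] (bagCount F) := by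
  let := countingSigmaAlgebra α
  exact measurable_to_countable' fun n ↦
    MeasurableSpace.measurableSet_generateFrom ⟨F, n, hF, rfl⟩

theorem measurableSet_nodup_of_standardBorel_general
    {α : Type*} [MeasurableSpace α] [MeasurableSpace.CountablySeparated α] :
    MeasurableSet[countingSigmaAlgebra α] {D : Multiset α | D.Nodup} := by
  let := countingSigmaAlgebra α
  obtain ⟨t, measurable_t, ht⟩ :=
    exists_seq_separating α (p := MeasurableSet) MeasurableSet.empty Set.univ
  have separates : ∀ a b, (∀ i, a ∈ t i ↔ b ∈ t i) → a = b :=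
    fun a b ↦ ht a (Set.mem_univ a) b (Set.mem_univ b)
  have nodup_eq : {D : Multiset α | D.Nodup} =
      ⋃ n, ⋂ F ∈ memPartition t n, bagCount F ⁻¹' Set.Iic 1 := by
    ext D
    simp [nodup_iff_exists_forall_memPartition_bagCount_le_one separates]
  rw [nodup_eq]
  exact .iUnion fun n ↦ .biInter (finite_memPartition t n).countable fun F hF ↦
    measurable_bagCount (MeasurableSpace.measurableSet_memPartition measurable_t n hF)
      measurableSet_Iic

/-- For a standard Borel space `α`, the set of duplicate-free finite
bags over `α` (i.e. the set instances, in which every element has multiplicity 1)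
belongs to the counting σ-algebra. -/
theorem measurableSet_nodup_of_standardBorel
    {α : Type*} [MeasurableSpace α] [StandardBorelSpace α] :
    MeasurableSet[countingSigmaAlgebra α] {D : Multiset α | D.Nodup} :=
  measurableSet_nodup_of_standardBorel_general
end

section
/- Let (α, 𝔄) and (β, 𝔅) be measurable spaces and let f : α → β be a measurable function. Then the projection map on finite multisets, which sends a finite multiset D over α to its image multiset f(D) over β (applying f elementwise, retaining multiplicities), is measurable with respect to the counting σ-algebra 𝔠_α on finite multisets over α and the counting σ-algebra 𝔠_β on finite multisets over β. -/
open MeasureTheory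

section

variable {α β : Type*}

lemma bagCount_map (f : α → β) (F : Set β) (D : Multiset α) :
    bagCount F (D.map f) = bagCount (f ⁻¹' F) D := by
  classical
  calc
    bagCount F (D.map f) = (D.filter (f · ∈ F)).card := Multiset.countP_map f D (· ∈ F)
    _ = bagCount (f ⁻¹' F) D := (Multiset.countP_eq_card_filter (· ∈ f ⁻¹' F) D).symm

lemma preimage_map_countingEvent (f : α → β) (F : Set β) (n : ℕ) :
    Multiset.map f ⁻¹' countingEvent F n = countingEvent (f ⁻¹' F) n := by
  ext D
  simp only [countingEvent, Set.mem_preimage, Set.mem_ofPred_eq, bagCount_map]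

lemma measurableSet_countingEvent [MeasurableSpace α] {F : Set α} (hF : MeasurableSet F) (n : ℕ) :
    MeasurableSet[countingSigmaAlgebra α] (countingEvent F n) :=
  MeasurableSpace.measurableSet_generateFrom ⟨F, n, hF, rfl⟩

end

/-- For measurable spaces `α`, `β` and a measurable `f : α → β`, the
projection map sending a finite bag `D` over `α` to its elementwise image bag `f(D)`
over `β` (retaining multiplicities) is measurable w.r.t. the counting σ-algebras. -/
theorem measurable_projection {α β : Type*} [MeasurableSpace α] [MeasurableSpace β]
    (f : α → β) (hf : Measurable f) :
    @Measurable (Multiset α) (Multiset β) (countingSigmaAlgebra α) (countingSigmaAlgebra β)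
      (fun D : Multiset α => D.map f) := by
  let := countingSigmaAlgebra α
  refine measurable_generateFrom ?_
  rintro _ ⟨F, n, hF, rfl⟩
  rw [preimage_map_countingEvent]
  exact measurableSet_countingEvent (hf hF) n
end
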